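/- Let n ≥ 3 and let K ⊆ ℝⁿ be a closed convex set with nonempty interior, K ≠ ℝⁿ, that is strictly convex and regular. Let δ : S^{n−1} → ℝ be continuous, H(u) = {x ∈ ℝⁿ : ⟨x, u⟩ = δ(u)}, and assume that for every u ∈ S^{n−1} the set frontier K ∩ H(u) is an (n−1)-dimensional convex quadric in H(u). Then there exists ρ > 0 such that for every u ∈ S^{n−1} and every point x ∈ frontier K ∩ H(u) there is a point z ∈ H(u) with ‖x − z‖ = ρ and {w ∈ H(u) : ‖w − z‖ ≤ ρ} ⊆ K ∩ H(u). -/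

import Mathlib

open Set Metric RealInnerProductSpace

noncomputable section

/-- Euclidean n-space. -/
abbrev En (n : ℕ) := EuclideanSpace ℝ (Fin n)

/-- A quadric surface in ℝⁿ: the zero set of a quadratic polynomial whose quadratic
part (given by a symmetric matrix) is not identically zero. -/
def IsQuadricSurface {n : ℕ} (Q : Set (En n)) : Prop :=
  ∃ (a : Matrix (Fin n) (Fin n) ℝ) (b : Fin n → ℝ) (c : ℝ),
    a.IsSymm ∧ a ≠ 0 ∧
    Q = {x : En n | (∑ i, ∑ k, a i k * x i * x k) + 2 * (∑ i, b i * x i) + c = 0}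

/-- A real quadric surface: a nonempty quadric surface. -/
def IsRealQuadricSurface {n : ℕ} (Q : Set (En n)) : Prop :=
  IsQuadricSurface Q ∧ Q.Nonempty

/-- The set of connected components of a subset `F` of a topological space. -/
def componentsIn {α : Type*} [TopologicalSpace α] (F : Set α) : Set (Set α) :=
  {C | ∃ x ∈ F, C = connectedComponentIn F x}

/-- A convex quadric: the frontier of a convex connected component of the complement
of a real quadric surface. -/
def IsConvexQuadric {n : ℕ} (S : Set (En n)) : Prop :=
  ∃ Q U : Set (En n), IsRealQuadricSurface Q ∧ U ∈ componentsIn Qᶜ ∧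
    Convex ℝ U ∧ S = frontier U
/-- `S` is an (n−1)-dimensional convex quadric in the hyperplane `H ⊆ ℝⁿ`:
for some affine isometry φ : ℝ^{n−1} → ℝⁿ with image `H`, the set φ⁻¹(S) is a
convex quadric in ℝ^{n−1}. -/
def IsConvexQuadricIn {n : ℕ} (H S : Set (En n)) : Prop :=
  S ⊆ H ∧ ∃ φ : En (n - 1) →ᵃⁱ[ℝ] En n,
    Set.range (φ : En (n - 1) → En n) = H ∧ IsConvexQuadric ((φ : En (n - 1) → En n) ⁻¹' S)

/-- The hyperplane H(u) = {x : ⟨x, u⟩ = δ(u)} associated to a unit vector u. -/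
def sphHyp {n : ℕ} (δ : sphere (0 : En n) 1 → ℝ) (u : sphere (0 : En n) 1) : Set (En n) :=
  {x : En n | ⟪x, (u : En n)⟫ = δ u}
/-- `G` is a supporting hyperplane of `K` at the point `x`. -/
def IsSupportHyperplaneAt {n : ℕ} (K : Set (En n)) (x : En n) (G : Set (En n)) : Prop :=
  (∃ (v : En n) (c : ℝ), v ≠ 0 ∧ G = {y : En n | ⟪y, v⟫ = c}) ∧
    x ∈ G ∧ (G ∩ K).Nonempty ∧ G ∩ interior K = ∅

/-- `K` is strictly convex: its frontier contains no segment with distinct endpoints. -/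
def IsStrictlyConvexSet {n : ℕ} (K : Set (En n)) : Prop :=
  ∀ x ∈ frontier K, ∀ y ∈ frontier K, x ≠ y → ¬ segment ℝ x y ⊆ frontier K

/-- `K` is regular: every frontier point lies on exactly one supporting hyperplane. -/
def IsRegularSet {n : ℕ} (K : Set (En n)) : Prop :=
  ∀ x ∈ frontier K, ∃! G : Set (En n), IsSupportHyperplaneAt K x G

/-!
Each section `frontier K ∩ H(u)` lies in the zero set of a normalized quadratic function `T` that
is nonpositive inside `K` and constant along `u`. Since the quadratic part of `T` has norm at most
one, a ball tangent to the section from inside stays in `{T < 0}` as long as its radius is at most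
half the norm of the gradient of `T` at the point of tangency; such a ball never meets
`frontier K`, hence stays in `K`. So a uniform lower bound for the gradients is needed.

For a point `p` of the interior section and `y` in the section of the frontier,
`⟪∇T(y) / 2, y - p⟫²` is a quarter of the discriminant of `T` along the line through `p` and `y`.
It is positive because strict convexity prevents the gradient from vanishing on the frontier. As `p`
can be chosen to depend continuously on `u`, the discriminant is continuous in `u`, `T` and the unit
direction. These range over a compact set: the sections vary lower hemicontinuously with `u`, so
that being an equation of the section is a closed condition.
-/

open Filter Topology

section Frontier

lemma nonempty_inter_frontier_of_isPreconnected {α : Type*} [TopologicalSpace α] {s t : Set α}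
    (hs : IsPreconnected s) (hst : (s ∩ t).Nonempty) (hst' : (s ∩ tᶜ).Nonempty) :
    (s ∩ frontier t).Nonempty := by
  by_contra hdisj
  have hcover : s ⊆ interior t ∪ interior tᶜ := fun x hx => by
    have : x ∉ frontier t := fun hxt => hdisj ⟨x, hx, hxt⟩
    rwa [← compl_frontier_eq_union_interior]
  have hint : (s ∩ interior t).Nonempty := hst.imp fun x hx =>
    ⟨hx.1, (hcover hx.1).resolve_right fun h => interior_subset h hx.2⟩
  have hext : (s ∩ interior tᶜ).Nonempty := hst'.imp fun x hx =>
    ⟨hx.1, (hcover hx.1).resolve_left fun h => hx.2 (interior_subset h)⟩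
  obtain ⟨x, -, hx, hx'⟩ := hs _ _ isOpen_interior isOpen_interior hcover hint hext
  exact interior_subset hx' (interior_subset hx)

lemma subset_of_isPreconnected_of_disjoint_frontier {α : Type*} [TopologicalSpace α] {s t : Set α}
    (hs : IsPreconnected s) (hst : (s ∩ t).Nonempty) (hdisj : Disjoint s (frontier t)) :
    s ⊆ t := by
  by_contra h
  exact not_disjoint_iff_nonempty_inter.2
    (nonempty_inter_frontier_of_isPreconnected hs hst (inter_compl_nonempty_iff.2 h)) hdisj

lemma frontier_connectedComponentIn_subset_compl {α : Type*} [TopologicalSpace α]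
    [LocallyConnectedSpace α] {F : Set α} (hF : IsOpen F) (x : α) :
    frontier (connectedComponentIn F x) ⊆ Fᶜ := by
  intro y hy hyF
  have hopen : ∀ z, IsOpen (connectedComponentIn F z) := fun z => hF.connectedComponentIn
  obtain ⟨z, hzy, hzx⟩ := mem_closure_iff.1 hy.1 _ (hopen y) (mem_connectedComponentIn hyF)
  have hyx : y ∈ connectedComponentIn F x := by
    rw [connectedComponentIn_eq hzx, ← connectedComponentIn_eq hzy]
    exact mem_connectedComponentIn hyF
  exact hy.2 ((hopen x).interior_eq.symm ▸ hyx)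

variable {E : Type*} [NormedAddCommGroup E] [NormedSpace ℝ E] {K : Set E}

lemma exists_mem_segment_mem_frontier {p q : E} (hp : p ∈ K) (hq : q ∉ K) :
    ∃ y ∈ segment ℝ p q, y ∈ frontier K :=
  nonempty_inter_frontier_of_isPreconnected (convex_segment p q).isPreconnected
    ⟨p, left_mem_segment ℝ p q, hp⟩ ⟨q, right_mem_segment ℝ p q, hq⟩

lemma sub_smul_sub_notMem {x p : E} (hK : Convex ℝ K) (hx : x ∈ frontier K)
    (hp : p ∈ interior K) {t : ℝ} (ht : 0 < t) : x - t • (p - x) ∉ K := fun hmem => by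
  refine hx.2 (hK.openSegment_interior_self_subset_interior hp hmem ?_)
  rw [openSegment_eq_image']
  refine ⟨1 / (1 + t), ⟨by positivity, (div_lt_one (by positivity)).2 (by linarith)⟩, ?_⟩
  simp only
  match_scalars <;> field_simp <;> ring

lemma strictConvex_of_segment_not_subset_frontier (hK : Convex ℝ K) (hK' : IsClosed K)
    (h : ∀ x ∈ frontier K, ∀ y ∈ frontier K, x ≠ y → ¬ segment ℝ x y ⊆ frontier K) :
    StrictConvex ℝ K := by
  refine hK.strictConvex fun x hx y hy hxy => ?_
  rw [← hK'.frontier_eq] at hx hy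
  simpa only [sdiff_nonempty] using h x hx y hy hxy

lemma add_mem_of_forall_add_smul_mem (hK : Convex ℝ K) (hK' : IsClosed K) {p e x : E}
    (hline : ∀ t : ℝ, p + t • e ∈ K) (hx : x ∈ K) : x + e ∈ K := by
  have hcone : e ∈ asymptoticCone ℝ K := by
    refine mem_asymptoticCone_iff.2 ((tendsto_id.atTop_smul_const_tendsto_asymptoticNhds e
      |>.asymptoticNhds_vadd_const p).frequently (Eventually.of_forall fun t => ?_).frequently)
    simpa [add_comm] using hline t
  simpa [add_comm] using
    hK.smul_vadd_mem_of_isClosed_of_mem_asymptoticCone hK' zero_le_one hcone hx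

lemma exists_add_smul_notMem (hK : StrictConvex ℝ K) (hK' : IsClosed K) (hne : K ≠ univ)
    {p e : E} (he : e ≠ 0) : ∃ t : ℝ, p + t • e ∉ K := by
  by_contra! hline
  obtain ⟨x, hx⟩ := nonempty_frontier_iff.2 ⟨⟨_, hline 0⟩, hne⟩
  have hxK : x ∈ K := hK'.frontier_subset hx
  have hadd : x + e ∈ K := add_mem_of_forall_add_smul_mem hK.convex hK' hline hxK
  have hsub : x - e ∈ K := by
    simpa only [sub_eq_add_neg] using add_mem_of_forall_add_smul_mem hK.convex hK' (e := -e)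
      (fun t => by simpa using hline (-t)) hxK
  have hdist : x + e ≠ x - e := by
    rw [Ne, ← sub_eq_zero, add_sub_sub_cancel, ← two_smul ℝ]
    simpa using he
  exact hx.2 (hK.openSegment_subset hadd hsub hdist (mem_openSegment_add_sub x e))

lemma exists_add_smul_mem_frontier (hK : StrictConvex ℝ K) (hK' : IsClosed K) (hne : K ≠ univ)
    {p e : E} (hp : p ∈ interior K) (he : e ≠ 0) : ∃ t : ℝ, t ≠ 0 ∧ p + t • e ∈ frontier K := by
  obtain ⟨s, hs⟩ := exists_add_smul_notMem hK hK' hne (p := p) he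
  obtain ⟨_, hy, hyK⟩ := exists_mem_segment_mem_frontier (interior_subset hp) hs
  rw [segment_eq_image'] at hy
  obtain ⟨r, -, rfl⟩ := hy
  refine ⟨r * s, fun h => hyK.2 ?_, ?_⟩
  · simpa [smul_smul, h] using hp
  · simpa [smul_smul] using hyK

end Frontier

section QuadraticFunctions

/-- The triples `(A, b, c)` encoding the quadratic functions `x ↦ ⟪A x, x⟫ + 2 ⟪b, x⟫ + c` on a
real inner product space. A product type, so that it carries a norm; the symmetry of `A` is
a separate hypothesis. -/
abbrev QuadFun (E : Type*) [NormedAddCommGroup E] [InnerProductSpace ℝ E] :=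
  (E →L[ℝ] E) × E × ℝ

variable {E F : Type*} [NormedAddCommGroup E] [InnerProductSpace ℝ E]
  [NormedAddCommGroup F] [InnerProductSpace ℝ F]

namespace QuadFun

/-- The value at `x` of the quadratic function encoded by `T`. -/
def eval (T : QuadFun E) (x : E) : ℝ := ⟪T.1 x, x⟫ + 2 * ⟪T.2.1, x⟫ + T.2.2

/-- Half the gradient at `x` of the quadratic function encoded by `T`, when `T.1` is symmetric. -/
def halfGrad (T : QuadFun E) (x : E) : E := T.1 x + T.2.1

/-- A quarter of the discriminant of the quadratic polynomial `t ↦ T.eval (p + t • e)`, when `T.1`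
is symmetric. -/
def discr (T : QuadFun E) (p e : E) : ℝ := ⟪T.halfGrad p, e⟫ ^ 2 - T.eval p * ⟪T.1 e, e⟫

/-- The pullback of a quadratic function under `x ↦ M x + d`; it encodes `x ↦ T.eval (M x + d)` when
`T.1` is symmetric. -/
def compAffine [CompleteSpace E] [CompleteSpace F] (T : QuadFun F) (M : E →L[ℝ] F) (d : F) :
    QuadFun E :=
  (M.adjoint ∘L T.1 ∘L M, M.adjoint (T.halfGrad d), T.eval d)

variable {T : QuadFun E}

lemma eval_add (hT : (T.1 : E →ₗ[ℝ] E).IsSymmetric) (x v : E) :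
    T.eval (x + v) = T.eval x + 2 * ⟪T.halfGrad x, v⟫ + ⟪T.1 v, v⟫ := by
  have hsymm : ⟪T.1 v, x⟫ = ⟪T.1 x, v⟫ := (hT v x).trans (real_inner_comm _ _)
  simp only [eval, halfGrad, map_add, inner_add_left, inner_add_right, hsymm]
  ring

lemma eval_add_smul (hT : (T.1 : E →ₗ[ℝ] E).IsSymmetric) (x v : E) (t : ℝ) :
    T.eval (x + t • v) = T.eval x + 2 * t * ⟪T.halfGrad x, v⟫ + t ^ 2 * ⟪T.1 v, v⟫ := by
  simp only [eval_add hT, map_smul, real_inner_smul_left, real_inner_smul_right]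
  ring

lemma eval_smul (a : ℝ) (T : QuadFun E) (x : E) : (a • T).eval x = a * T.eval x := by
  simp only [eval, Prod.smul_fst, Prod.smul_snd, _root_.smul_apply,
    real_inner_smul_left, smul_eq_mul]
  ring

lemma discr_smul (T : QuadFun E) (p e : E) (t : ℝ) :
    T.discr p (t • e) = t ^ 2 * T.discr p e := by
  simp only [discr, map_smul, real_inner_smul_left, real_inner_smul_right]
  ring

lemma sq_inner_halfGrad_sub_eq_discr (hT : (T.1 : E →ₗ[ℝ] E).IsSymmetric) {x : E}
    (hx : T.eval x = 0) (p : E) : ⟪T.halfGrad x, x - p⟫ ^ 2 = T.discr p (x - p) := by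
  have hgrad : T.halfGrad x = T.halfGrad p + T.1 (x - p) := by simp only [halfGrad, map_sub]; abel
  have heval : T.eval p + 2 * ⟪T.halfGrad p, x - p⟫ + ⟪T.1 (x - p), x - p⟫ = 0 := by
    rw [← eval_add hT, add_sub_cancel, hx]
  rw [discr, hgrad, inner_add_left]
  linear_combination ⟪T.1 (x - p), x - p⟫ * heval

lemma discr_normalize_le_sq_norm_halfGrad (hT : (T.1 : E →ₗ[ℝ] E).IsSymmetric) {x p : E}
    (hx : T.eval x = 0) (hxp : x ≠ p) :
    T.discr p (NormedSpace.normalize (x - p)) ≤ ‖T.halfGrad x‖ ^ 2 := by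
  have hpos : 0 < ‖x - p‖ := norm_sub_pos_iff.2 hxp
  have hcs : ⟪T.halfGrad x, x - p⟫ ^ 2 ≤ (‖T.halfGrad x‖ * ‖x - p‖) ^ 2 := by
    rw [← sq_abs]
    gcongr
    exact abs_real_inner_le_norm _ _
  rw [sq_inner_halfGrad_sub_eq_discr hT hx, mul_pow] at hcs
  rw [NormedSpace.normalize, discr_smul, inv_pow, inv_mul_le_iff₀ (by positivity), mul_comm]
  exact hcs

lemma continuous_eval : Continuous fun q : QuadFun E × E => q.1.eval q.2 := by
  unfold eval
  fun_prop

lemma continuous_discr : Continuous fun q : QuadFun E × E × E => q.1.discr q.2.1 q.2.2 := by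
  unfold discr eval halfGrad
  fun_prop

section CompAffine

variable [CompleteSpace E] [CompleteSpace F]

lemma eval_compAffine {T : QuadFun F} (hT : (T.1 : F →ₗ[ℝ] F).IsSymmetric) (M : E →L[ℝ] F) (d : F)
    (x : E) : (T.compAffine M d).eval x = T.eval (M x + d) := by
  rw [add_comm, eval_add hT]
  simp only [eval, compAffine, halfGrad, ContinuousLinearMap.comp_apply,
    ContinuousLinearMap.adjoint_inner_left]
  ring

lemma isSymmetric_compAffine {T : QuadFun F} (hT : (T.1 : F →ₗ[ℝ] F).IsSymmetric) (M : E →L[ℝ] F)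
    (d : F) : ((T.compAffine M d).1 : E →ₗ[ℝ] E).IsSymmetric := fun x y => by
  simpa [compAffine, ContinuousLinearMap.adjoint_inner_left,
    ContinuousLinearMap.adjoint_inner_right] using hT (M x) (M y)

end CompAffine

end QuadFun

end QuadraticFunctions

section Hyperplanes

variable {E : Type*} [NormedAddCommGroup E] [InnerProductSpace ℝ E] {u x y v : E} {c : ℝ}

/-- The hyperplane with normal vector `u` and offset `c`; in these terms `sphHyp δ u` is
`hyperplane u (δ u)`. -/
def hyperplane (u : E) (c : ℝ) : Set E := {x | ⟪x, u⟫ = c}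

lemma convex_hyperplane_inner (u : E) (c : ℝ) : Convex ℝ (hyperplane u c) :=
  convex_hyperplane ⟨fun _ _ => inner_add_left _ _ _, fun _ _ => real_inner_smul_left _ _ _⟩ c

lemma inner_sub_eq_zero_of_mem_hyperplane (hx : x ∈ hyperplane u c) (hy : y ∈ hyperplane u c) :
    ⟪x - y, u⟫ = 0 := by
  rw [inner_sub_left, hx, hy, sub_self]

lemma add_smul_mem_hyperplane (hx : x ∈ hyperplane u c) (hv : ⟪v, u⟫ = 0) (t : ℝ) :
    x + t • v ∈ hyperplane u c := by
  rw [hyperplane, mem_ofPred_eq, inner_add_left, real_inner_smul_left, hx, hv, mul_zero, add_zero]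

/-- The orthogonal projection of `x` to `hyperplane u c`, for a unit vector `u`. -/
def hyperplaneFoot (u : E) (c : ℝ) (x : E) : E := x + (c - ⟪x, u⟫) • u

lemma hyperplaneFoot_mem (hu : ‖u‖ = 1) : hyperplaneFoot u c x ∈ hyperplane u c := by
  simp [hyperplane, hyperplaneFoot, inner_add_left, real_inner_smul_left, hu]

lemma hyperplaneFoot_eq_self (hx : x ∈ hyperplane u c) : hyperplaneFoot u c x = x := by
  rw [hyperplaneFoot, hx, sub_self, zero_smul, add_zero]

lemma exists_ne_zero_inner_eq_zero (hE : 2 < Module.finrank ℝ E) (u w : E) :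
    ∃ v : E, v ≠ 0 ∧ ⟪v, u⟫ = 0 ∧ ⟪v, w⟫ = 0 := by
  classical
  have := Module.finite_of_finrank_pos (by omega : 0 < Module.finrank ℝ E)
  have hspan : Module.finrank ℝ (Submodule.span ℝ {u, w}) ≤ 2 :=
    (finrank_span_le_card _).trans (by simpa using Finset.card_le_two)
  have horth : (Submodule.span ℝ {u, w})ᗮ ≠ ⊥ := fun h => by
    have := Submodule.finrank_add_finrank_orthogonal (Submodule.span ℝ {u, w})
    rw [h, finrank_bot] at this
    omega
  obtain ⟨v, hv, hv0⟩ := Submodule.exists_mem_ne_zero_of_ne_bot horth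
  exact ⟨v, hv0, (Submodule.mem_orthogonal' _ v).1 hv u (Submodule.subset_span (by simp)),
    (Submodule.mem_orthogonal' _ v).1 hv w (Submodule.subset_span (by simp))⟩

end Hyperplanes

section SectionEquations

variable {E : Type*} [NormedAddCommGroup E] [InnerProductSpace ℝ E]
  {K : Set E} {u p x y : E} {c : ℝ} {T : QuadFun E}

/-- `T` is a normalized quadratic equation of the section of `frontier K` by `hyperplane u c`,
nonpositive on the section of `interior K`. The conditions `T.1 u = 0` and `⟪T.2.1, u⟫ = 0` make
the encoded function constant along `u`, so that its gradient is parallel to the hyperplane. -/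
structure IsSectionEquation (K : Set E) (u : E) (c : ℝ) (T : QuadFun E) : Prop where
  norm_eq_one : ‖T‖ = 1
  isSymmetric : (T.1 : E →ₗ[ℝ] E).IsSymmetric
  apply_normal : T.1 u = 0
  inner_normal : ⟪T.2.1, u⟫ = 0
  eval_nonpos : ∀ x ∈ interior K ∩ hyperplane u c, T.eval x ≤ 0
  eval_eq_zero : ∀ x ∈ frontier K ∩ hyperplane u c, T.eval x = 0

namespace IsSectionEquation

lemma inner_halfGrad_normal (hT : IsSectionEquation K u c T) (x : E) : ⟪T.halfGrad x, u⟫ = 0 := by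
  have hAu : ⟪T.1 x, u⟫ = ⟪x, T.1 u⟫ := hT.isSymmetric x u
  rw [QuadFun.halfGrad, inner_add_left, hAu, hT.apply_normal, hT.inner_normal, inner_zero_right,
    add_zero]

lemma inner_halfGrad_sub_nonpos (hT : IsSectionEquation K u c T) (hK : Convex ℝ K)
    (hx : x ∈ K ∩ hyperplane u c) (hx0 : T.eval x = 0) (hp : p ∈ interior K ∩ hyperplane u c) :
    ⟪T.halfGrad x, p - x⟫ ≤ 0 := by
  set g := ⟪T.halfGrad x, p - x⟫
  set a := ⟪T.1 (p - x), p - x⟫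
  have hle : ∀ t ∈ Ioc (0 : ℝ) 1, g ≤ t * (-a / 2) := fun t ht => by
    have hmem : x + t • (p - x) ∈ interior K ∩ hyperplane u c :=
      ⟨hK.add_smul_sub_mem_interior hx.1 hp.1 ht,
        add_smul_mem_hyperplane hx.2 (inner_sub_eq_zero_of_mem_hyperplane hp.2 hx.2) t⟩
    have heval := hT.eval_nonpos _ hmem
    rw [QuadFun.eval_add_smul hT.isSymmetric, hx0] at heval
    refine le_of_mul_le_mul_left ?_ ht.1
    linear_combination heval / 2
  have hlim : Tendsto (fun t : ℝ => t * (-a / 2)) (𝓝[>] 0) (𝓝 0) :=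
    ((continuous_mul_const _).tendsto' 0 0 (zero_mul _)).mono_left nhdsWithin_le_nhds
  exact ge_of_tendsto hlim (eventually_of_mem (Ioc_mem_nhdsGT one_pos) hle)

lemma inner_halfGrad_sub_neg_of_ne_zero (hT : IsSectionEquation K u c T) (hK : Convex ℝ K)
    (hx : x ∈ K ∩ hyperplane u c) (hx0 : T.eval x = 0) (hgrad : T.halfGrad x ≠ 0)
    (hp : p ∈ interior K ∩ hyperplane u c) : ⟪T.halfGrad x, p - x⟫ < 0 := by
  have hcont : Continuous fun t : ℝ => p + t • T.halfGrad x := by fun_prop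
  have hnear : ∀ᶠ t : ℝ in 𝓝[>] 0, p + t • T.halfGrad x ∈ interior K :=
    (hcont.tendsto' 0 p (by simp)).mono_left nhdsWithin_le_nhds (isOpen_interior.mem_nhds hp.1)
  obtain ⟨t, htK, ht⟩ := (hnear.and self_mem_nhdsWithin).exists
  have hle := hT.inner_halfGrad_sub_nonpos hK hx hx0
    ⟨htK, add_smul_mem_hyperplane hp.2 (hT.inner_halfGrad_normal x) t⟩
  rw [add_sub_right_comm, inner_add_right, real_inner_smul_right, real_inner_self_eq_norm_sq] at hle
  have hpos : 0 < t * ‖T.halfGrad x‖ ^ 2 := mul_pos ht (by positivity)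
  linarith

lemma eval_ne_zero_of_halfGrad_eq_zero (hT : IsSectionEquation K u c T) (hu : ‖u‖ = 1)
    (hform : ∀ v, ⟪v, u⟫ = 0 → ⟪T.1 v, v⟫ = 0) (hgrad : T.halfGrad x = 0) : T.eval x ≠ 0 := by
  intro hx
  have hA : T.1 = 0 := by
    suffices (T.1 : E →ₗ[ℝ] E) = 0 from ContinuousLinearMap.coe_injective this
    refine hT.isSymmetric.inner_map_self_eq_zero.1 fun y => ?_
    have hT_foot : T.1 (hyperplaneFoot u 0 y) = T.1 y := by
      rw [hyperplaneFoot, map_add, map_smul, hT.apply_normal, smul_zero, add_zero]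
    have := hform _ (hyperplaneFoot_mem (c := 0) (x := y) hu)
    have hAu : ⟪T.1 y, u⟫ = ⟪y, T.1 u⟫ := hT.isSymmetric y u
    rw [hT_foot, hyperplaneFoot, inner_add_right, real_inner_smul_right, hAu,
      hT.apply_normal] at this
    simpa using this
  have hb : T.2.1 = 0 := by simpa [QuadFun.halfGrad, hA] using hgrad
  have hc : T.2.2 = 0 := by simpa [QuadFun.eval, hA, hb] using hx
  have hT0 : T = 0 := Prod.ext hA (Prod.ext hb hc)
  simpa [hT0] using hT.norm_eq_one

lemma eval_neg (hT : IsSectionEquation K u c T) (hu : ‖u‖ = 1) (hK : StrictConvex ℝ K)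
    (hK' : IsClosed K) (hne : K ≠ univ) (hp : p ∈ interior K ∩ hyperplane u c) : T.eval p < 0 := by
  refine (hT.eval_nonpos p hp).lt_of_ne fun hp0 => ?_
  have hgrad : T.halfGrad p = 0 := by
    by_contra hgrad
    simpa using hT.inner_halfGrad_sub_neg_of_ne_zero hK.convex ⟨interior_subset hp.1, hp.2⟩ hp0
      hgrad hp
  refine hT.eval_ne_zero_of_halfGrad_eq_zero hu (fun v hv => ?_) hgrad hp0
  rcases eq_or_ne v 0 with rfl | hv0
  · simp
  obtain ⟨t, ht, htK⟩ := exists_add_smul_mem_frontier hK hK' hne hp.1 hv0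
  have heval := hT.eval_eq_zero _ ⟨htK, add_smul_mem_hyperplane hp.2 hv t⟩
  rw [QuadFun.eval_add_smul hT.isSymmetric, hp0, hgrad] at heval
  simpa [ht] using heval

lemma halfGrad_ne_zero (hT : IsSectionEquation K u c T) (hu : ‖u‖ = 1)
    (hE : 2 < Module.finrank ℝ E) (hK : StrictConvex ℝ K) (hK' : IsClosed K) (hne : K ≠ univ)
    (hp : p ∈ interior K ∩ hyperplane u c) (hy : y ∈ frontier K ∩ hyperplane u c) :
    T.halfGrad y ≠ 0 := by
  -- Otherwise `T` vanishes on the whole segment from `y` to another frontier point `z`, whose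
  -- midpoint is interior.
  intro hgrad
  obtain ⟨v, hv0, hvu, hv⟩ := exists_ne_zero_inner_eq_zero hE u (p - y)
  obtain ⟨t, ht, htK⟩ := exists_add_smul_mem_frontier hK hK' hne hp.1 hv0
  set z := p + t • v
  have hz : z ∈ hyperplane u c := add_smul_mem_hyperplane hp.2 hvu t
  have hyz : y ≠ z := fun h => by
    have : ⟪v, z - y⟫ = t * ‖v‖ ^ 2 := by
      rw [add_sub_right_comm, inner_add_right, hv, real_inner_smul_right,
        real_inner_self_eq_norm_sq, zero_add]
    simp [← h, ht, hv0, eq_comm] at this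
  have hflat : ⟪T.1 (z - y), z - y⟫ = 0 := by
    have := hT.eval_eq_zero z ⟨htK, hz⟩
    rw [← add_sub_cancel y z, QuadFun.eval_add hT.isSymmetric, hT.eval_eq_zero y hy, hgrad] at this
    simpa using this
  have hmid : y + (1 / 2 : ℝ) • (z - y) ∈ interior K :=
    hK.add_smul_sub_mem (hK'.frontier_subset hy.1) (hK'.frontier_subset htK) hyz
      (by norm_num) (by norm_num)
  refine (hT.eval_neg hu hK hK' hne ⟨hmid, add_smul_mem_hyperplane hy.2
    (inner_sub_eq_zero_of_mem_hyperplane hz hy.2) _⟩).ne ?_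
  rw [QuadFun.eval_add_smul hT.isSymmetric, hT.eval_eq_zero y hy, hgrad, hflat]
  simp

lemma inner_halfGrad_sub_neg (hT : IsSectionEquation K u c T) (hu : ‖u‖ = 1)
    (hE : 2 < Module.finrank ℝ E) (hK : StrictConvex ℝ K) (hK' : IsClosed K) (hne : K ≠ univ)
    (hp : p ∈ interior K ∩ hyperplane u c) (hy : y ∈ frontier K ∩ hyperplane u c) :
    ⟪T.halfGrad y, p - y⟫ < 0 :=
  hT.inner_halfGrad_sub_neg_of_ne_zero hK.convex ⟨hK'.frontier_subset hy.1, hy.2⟩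
    (hT.eval_eq_zero y hy) (hT.halfGrad_ne_zero hu hE hK hK' hne hp hy) hp

lemma discr_pos (hT : IsSectionEquation K u c T) (hu : ‖u‖ = 1)
    (hE : 2 < Module.finrank ℝ E) (hK : StrictConvex ℝ K) (hK' : IsClosed K) (hne : K ≠ univ)
    (hp : p ∈ interior K ∩ hyperplane u c) {e : E} (he : e ≠ 0) (heu : ⟪e, u⟫ = 0) :
    0 < T.discr p e := by
  obtain ⟨t, -, htK⟩ := exists_add_smul_mem_frontier hK hK' hne hp.1 he
  set y := p + t • e
  have hy : y ∈ frontier K ∩ hyperplane u c := ⟨htK, add_smul_mem_hyperplane hp.2 heu t⟩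
  have hyp : y - p = t • e := add_sub_cancel_left _ _
  have hneg := hT.inner_halfGrad_sub_neg hu hE hK hK' hne hp hy
  have hdiscr : t ^ 2 * T.discr p e = ⟪T.halfGrad y, p - y⟫ ^ 2 := by
    rw [← QuadFun.discr_smul, ← hyp,
      ← QuadFun.sq_inner_halfGrad_sub_eq_discr hT.isSymmetric (hT.eval_eq_zero y hy), ← neg_sub p y,
      inner_neg_right, neg_sq]
  exact pos_of_mul_pos_right (hdiscr ▸ sq_pos_of_neg hneg) (sq_nonneg t)

end IsSectionEquation

end SectionEquations

section RollingBall

variable {E : Type*} [NormedAddCommGroup E] [InnerProductSpace ℝ E]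
  {K : Set E} {u p x : E} {c ρ : ℝ} {T : QuadFun E}

lemma add_mem_ball_sub_smul_iff {ν : E} (hν : ‖ν‖ = 1) (hρ : 0 < ρ) (x v : E) :
    x + v ∈ ball (x - ρ • ν) ρ ↔ ‖v‖ ^ 2 + 2 * ρ * ⟪ν, v⟫ < 0 := by
  have hsq : ‖x + v - (x - ρ • ν)‖ ^ 2 = ‖v‖ ^ 2 + 2 * ρ * ⟪ν, v⟫ + ρ ^ 2 := by
    rw [add_sub_sub_cancel, norm_add_sq_real, norm_smul, hν, real_inner_smul_right,
      real_inner_comm, mul_one, Real.norm_eq_abs, sq_abs]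
    ring
  rw [mem_ball_iff_norm, ← sq_lt_sq₀ (norm_nonneg _) hρ.le, hsq, add_lt_iff_neg_right]

lemma exists_add_smul_sub_mem_ball_sub_smul {ν : E} (hν : ‖ν‖ = 1) (hρ : 0 < ρ)
    (hp : ⟪ν, p - x⟫ < 0) : ∃ t ∈ Ioc (0 : ℝ) 1, x + t • (p - x) ∈ ball (x - ρ • ν) ρ := by
  have hcont : Continuous fun t : ℝ => t * ‖p - x‖ ^ 2 + 2 * ρ * ⟪ν, p - x⟫ := by fun_prop
  have hneg : ∀ᶠ t : ℝ in 𝓝[>] 0, t * ‖p - x‖ ^ 2 + 2 * ρ * ⟪ν, p - x⟫ < 0 :=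
    nhdsWithin_le_nhds (hcont.continuousAt.eventually_lt_const (by simp [mul_neg_of_pos_of_neg, *]))
  obtain ⟨t, ht, ht01⟩ := (hneg.and (Ioc_mem_nhdsGT one_pos)).exists
  refine ⟨t, ht01, (add_mem_ball_sub_smul_iff hν hρ _ _).2 ?_⟩
  calc ‖t • (p - x)‖ ^ 2 + 2 * ρ * ⟪ν, t • (p - x)⟫
      = t * (t * ‖p - x‖ ^ 2 + 2 * ρ * ⟪ν, p - x⟫) := by
        rw [norm_smul, real_inner_smul_right, mul_pow, Real.norm_eq_abs, sq_abs]
        ring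
    _ < 0 := mul_neg_of_pos_of_neg ht01.1 ht

namespace QuadFun

lemma eval_neg_of_mem_ball (hT : (T.1 : E →ₗ[ℝ] E).IsSymmetric) (hT1 : ‖T.1‖ ≤ 1)
    (hx : T.eval x = 0) (hρ : 0 < ρ) (hgrad : ρ ≤ ‖T.halfGrad x‖) {w : E}
    (hw : w ∈ ball (x - ρ • NormedSpace.normalize (T.halfGrad x)) ρ) : T.eval w < 0 := by
  obtain ⟨v, rfl⟩ : ∃ v, w = x + v := ⟨w - x, by abel⟩
  set ν := NormedSpace.normalize (T.halfGrad x)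
  have hν : ‖ν‖ = 1 := NormedSpace.norm_normalize (norm_pos_iff.1 (hρ.trans_le hgrad))
  rw [add_mem_ball_sub_smul_iff hν hρ] at hw
  have hνv : ⟪ν, v⟫ < 0 := by nlinarith [sq_nonneg ‖v‖]
  have hquad : ⟪T.1 v, v⟫ ≤ ‖v‖ ^ 2 := calc
    ⟪T.1 v, v⟫ ≤ ‖T.1 v‖ * ‖v‖ := real_inner_le_norm _ _
    _ ≤ ‖v‖ * ‖v‖ := by gcongr; simpa using T.1.le_of_opNorm_le hT1 v
    _ = ‖v‖ ^ 2 := (sq _).symm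
  calc T.eval (x + v) = 2 * (‖T.halfGrad x‖ * ⟪ν, v⟫) + ⟪T.1 v, v⟫ := by
        rw [eval_add hT, hx, zero_add, ← real_inner_smul_left ν, NormedSpace.norm_smul_normalize]
    _ ≤ 2 * (ρ * ⟪ν, v⟫) + ‖v‖ ^ 2 :=
        add_le_add (mul_le_mul_of_nonneg_left (mul_le_mul_of_nonpos_right hgrad hνv.le) two_pos.le)
          hquad
    _ < 0 := by linarith

end QuadFun

lemma IsSectionEquation.closedBall_inter_hyperplane_subset (hT : IsSectionEquation K u c T)
    (hK : Convex ℝ K) (hK' : IsClosed K) (hp : p ∈ interior K ∩ hyperplane u c)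
    (hx : x ∈ frontier K ∩ hyperplane u c) (hpx : ⟪T.halfGrad x, p - x⟫ < 0) (hρ : 0 < ρ)
    (hgrad : ρ ≤ ‖T.halfGrad x‖) :
    closedBall (x - ρ • NormedSpace.normalize (T.halfGrad x)) ρ ∩ hyperplane u c ⊆ K := by
  rintro w ⟨hw, hwH⟩
  by_contra hwK
  have hgpos : 0 < ‖T.halfGrad x‖ := hρ.trans_le hgrad
  have hνp : ⟪NormedSpace.normalize (T.halfGrad x), p - x⟫ < 0 := by
    rw [NormedSpace.normalize, real_inner_smul_left]
    exact mul_neg_of_pos_of_neg (inv_pos.2 hgpos) hpx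
  obtain ⟨t, ht, htball⟩ := exists_add_smul_sub_mem_ball_sub_smul
    (NormedSpace.norm_normalize (norm_pos_iff.1 hgpos)) hρ hνp
  set q := x + t • (p - x)
  have hqK : q ∈ K :=
    interior_subset (hK.add_smul_sub_mem_interior (hK'.frontier_subset hx.1) hp.1 ht)
  have hqH : q ∈ hyperplane u c :=
    add_smul_mem_hyperplane hx.2 (inner_sub_eq_zero_of_mem_hyperplane hp.2 hx.2) t
  obtain ⟨y, hyseg, hyK⟩ := exists_mem_segment_mem_frontier hqK hwK
  have hyball : y ∈ ball (x - ρ • NormedSpace.normalize (T.halfGrad x)) ρ := by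
    rw [← insert_endpoints_openSegment] at hyseg
    rcases hyseg with rfl | rfl | hyseg
    · exact htball
    · exact absurd (hK'.frontier_subset hyK) hwK
    · rw [← interior_closedBall _ hρ.ne'] at htball ⊢
      exact (convex_closedBall _ _).openSegment_interior_self_subset_interior htball hw hyseg
  refine (QuadFun.eval_neg_of_mem_ball hT.isSymmetric ((norm_fst_le T).trans hT.norm_eq_one.le)
    (hT.eval_eq_zero x hx) hρ hgrad hyball).ne (hT.eval_eq_zero y ⟨hyK, ?_⟩)
  exact (convex_hyperplane_inner u c).segment_subset hqH hwH hyseg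

end RollingBall

section Compactness

lemma isClosed_setOf_forall_mem_of_lowerHemicontinuous {X Y Z A : Type*} [TopologicalSpace X]
    [TopologicalSpace Y] [TopologicalSpace Z] [TopologicalSpace A] {F : X → Set Y}
    (hF : LowerHemicontinuous F) {f : A × Y → Z} (hf : Continuous f) {C : Set Z} (hC : IsClosed C) :
    IsClosed {q : X × A | ∀ y ∈ F q.1, f (q.2, y) ∈ C} := by
  refine isOpen_compl_iff.1 (isOpen_iff_mem_nhds.2 ?_)
  rintro ⟨x, a⟩ hxa
  simp only [mem_compl_iff, mem_ofPred_eq, not_forall] at hxa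
  obtain ⟨y, hy, hyC⟩ := hxa
  obtain ⟨V, W, hV, hW, haV, hyW, hVW⟩ :=
    isOpen_prod_iff.1 (hC.isOpen_compl.preimage hf) a y hyC
  have hmeet : ∀ᶠ x' in 𝓝 x, (F x' ∩ W).Nonempty :=
    lowerHemicontinuousAt_iff.1 (hF x) W hW ⟨y, hy, hyW⟩
  filter_upwards [hmeet.prod_nhds (hV.mem_nhds haV)] with ⟨x', a'⟩ ⟨⟨y', hy', hy'W⟩, ha'⟩ hforall
  exact hVW (mk_mem_prod ha' hy'W) (hforall y' hy')

variable {E X : Type*} [NormedAddCommGroup E] [InnerProductSpace ℝ E] [TopologicalSpace X]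
  {K : Set E} {ν : X → E} {c : X → ℝ}

lemma continuous_hyperplaneFoot (hν : Continuous ν) (hc : Continuous c) (x : E) :
    Continuous fun i => hyperplaneFoot (ν i) (c i) x := by
  unfold hyperplaneFoot
  fun_prop

lemma eventually_hyperplaneFoot_mem (hν : Continuous ν) (hc : Continuous c) {U : Set E}
    (hU : IsOpen U) {i : X} {x : E} (hxU : x ∈ U) (hx : x ∈ hyperplane (ν i) (c i)) :
    ∀ᶠ j in 𝓝 i, hyperplaneFoot (ν j) (c j) x ∈ U :=
  (continuous_hyperplaneFoot hν hc x).tendsto' i x (hyperplaneFoot_eq_self hx) (hU.mem_nhds hxU)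

lemma lowerHemicontinuous_inter_hyperplane (hν : Continuous ν) (hν1 : ∀ i, ‖ν i‖ = 1)
    (hc : Continuous c) {U : Set E} (hU : IsOpen U) :
    LowerHemicontinuous fun i => U ∩ hyperplane (ν i) (c i) := by
  refine lowerHemicontinuous_iff.2 fun i => lowerHemicontinuousAt_iff.2 ?_
  rintro W hW ⟨x, ⟨hxU, hx⟩, hxW⟩
  filter_upwards [eventually_hyperplaneFoot_mem hν hc (hU.inter hW) ⟨hxU, hxW⟩ hx] with j hj
  exact ⟨_, ⟨hj.1, hyperplaneFoot_mem (hν1 j)⟩, hj.2⟩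

lemma lowerHemicontinuous_frontier_inter_hyperplane (hν : Continuous ν) (hν1 : ∀ i, ‖ν i‖ = 1)
    (hc : Continuous c) (hK : Convex ℝ K) (hK' : IsClosed K)
    (hne : ∀ i, (interior K ∩ hyperplane (ν i) (c i)).Nonempty) :
    LowerHemicontinuous fun i => frontier K ∩ hyperplane (ν i) (c i) := by
  refine lowerHemicontinuous_iff.2 fun i => lowerHemicontinuousAt_iff.2 ?_
  rintro W hW ⟨x, ⟨hxK, hx⟩, hxW⟩
  obtain ⟨p, hpK, hp⟩ := hne i
  obtain ⟨r, hr, hrW⟩ := Metric.isOpen_iff.1 hW x hxW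
  have hpx := inner_sub_eq_zero_of_mem_hyperplane hp hx
  have hadd : ∀ᶠ t : ℝ in 𝓝[>] 0, x + t • (p - x) ∈ ball x r := nhdsWithin_le_nhds <|
    Continuous.tendsto' (by fun_prop) 0 x (by simp) (ball_mem_nhds x hr)
  have hsub : ∀ᶠ t : ℝ in 𝓝[>] 0, x - t • (p - x) ∈ ball x r := nhdsWithin_le_nhds <|
    Continuous.tendsto' (by fun_prop) 0 x (by simp) (ball_mem_nhds x hr)
  obtain ⟨t, htadd, htsub, ht⟩ := (hadd.and (hsub.and (Ioc_mem_nhdsGT one_pos))).exists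
  have hin : x + t • (p - x) ∈ ball x r ∩ interior K :=
    ⟨htadd, hK.add_smul_sub_mem_interior (hK'.frontier_subset hxK) hpK ht⟩
  have hout : x - t • (p - x) ∈ ball x r ∩ Kᶜ := ⟨htsub, sub_smul_sub_notMem hK hxK hpK ht.1⟩
  filter_upwards [eventually_hyperplaneFoot_mem hν hc (isOpen_ball.inter isOpen_interior) hin
      (add_smul_mem_hyperplane hx hpx t),
    eventually_hyperplaneFoot_mem hν hc (isOpen_ball.inter hK'.isOpen_compl) hout
      (by rw [sub_eq_add_neg, ← neg_smul]; exact add_smul_mem_hyperplane hx hpx (-t))]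
    with j hjin hjout
  obtain ⟨y, hy, hyK⟩ := exists_mem_segment_mem_frontier (interior_subset hjin.2) hjout.2
  exact ⟨y, ⟨hyK, (convex_hyperplane_inner _ _).segment_subset (hyperplaneFoot_mem (hν1 j))
    (hyperplaneFoot_mem (hν1 j)) hy⟩, hrW ((convex_ball x r).segment_subset hjin.1 hjout.1 hy)⟩

lemma exists_continuous_mem_interior_inter_hyperplane [NormalSpace X] [ParacompactSpace X]
    (hν : Continuous ν) (hν1 : ∀ i, ‖ν i‖ = 1) (hc : Continuous c) (hK : Convex ℝ K)
    (hne : ∀ i, (interior K ∩ hyperplane (ν i) (c i)).Nonempty) :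
    ∃ p : C(X, E), ∀ i, p i ∈ interior K ∩ hyperplane (ν i) (c i) := by
  refine exists_continuous_forall_mem_convex_of_local
    (fun i => hK.interior.inter (convex_hyperplane_inner _ _)) fun i => ?_
  obtain ⟨x, hxK, hx⟩ := hne i
  refine ⟨_, eventually_hyperplaneFoot_mem hν hc isOpen_interior hxK hx, _,
    (continuous_hyperplaneFoot hν hc x).continuousOn, fun j hj => ⟨hj, hyperplaneFoot_mem (hν1 j)⟩⟩

lemma isClosed_setOf_isSectionEquation (hν : Continuous ν) (hν1 : ∀ i, ‖ν i‖ = 1)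
    (hc : Continuous c) (hK : Convex ℝ K) (hK' : IsClosed K)
    (hne : ∀ i, (interior K ∩ hyperplane (ν i) (c i)).Nonempty) :
    IsClosed {q : X × QuadFun E | IsSectionEquation K (ν q.1) (c q.1) q.2} := by
  have hsymm : IsClosed {q : X × QuadFun E | (q.2.1 : E →ₗ[ℝ] E).IsSymmetric} := by
    simp only [LinearMap.IsSymmetric, ofPred_forall]
    refine isClosed_iInter fun x => isClosed_iInter fun y => isClosed_eq ?_ ?_ <;>
      simp only [ContinuousLinearMap.coe_coe] <;> fun_prop
  have hint := isClosed_setOf_forall_mem_of_lowerHemicontinuous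
    (lowerHemicontinuous_inter_hyperplane hν hν1 hc (isOpen_interior (s := K)))
    QuadFun.continuous_eval isClosed_Iic (C := Iic 0)
  have hfr := isClosed_setOf_forall_mem_of_lowerHemicontinuous
    (lowerHemicontinuous_frontier_inter_hyperplane hν hν1 hc hK hK' hne)
    QuadFun.continuous_eval (isClosed_singleton (x := 0))
  have hnorm : IsClosed {q : X × QuadFun E | ‖q.2‖ = 1} := isClosed_eq (by fun_prop) (by fun_prop)
  have happly : IsClosed {q : X × QuadFun E | q.2.1 (ν q.1) = 0} :=
    isClosed_eq (by fun_prop) (by fun_prop)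
  have hinner : IsClosed {q : X × QuadFun E | ⟪q.2.2.1, ν q.1⟫ = 0} :=
    isClosed_eq (by fun_prop) (by fun_prop)
  convert hnorm.inter (hsymm.inter (happly.inter (hinner.inter (hint.inter hfr)))) using 1
  ext q
  exact ⟨fun h => ⟨h.1, h.2, h.3, h.4, h.5, h.6⟩, fun ⟨h₁, h₂, h₃, h₄, h₅, h₆⟩ =>
    ⟨h₁, h₂, h₃, h₄, h₅, h₆⟩⟩

lemma isCompact_setOf_isSectionEquation_direction [CompactSpace X] [FiniteDimensional ℝ E]
    (hν : Continuous ν) (hν1 : ∀ i, ‖ν i‖ = 1)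
    (hc : Continuous c) (hK : Convex ℝ K) (hK' : IsClosed K)
    (hne : ∀ i, (interior K ∩ hyperplane (ν i) (c i)).Nonempty) :
    IsCompact {q : X × QuadFun E × E | IsSectionEquation K (ν q.1) (c q.1) q.2.1 ∧
      ‖q.2.2‖ = 1 ∧ ⟪q.2.2, ν q.1⟫ = 0} := by
  have := FiniteDimensional.proper ℝ (QuadFun E)
  have := FiniteDimensional.proper ℝ E
  have hclosed : IsClosed {q : X × QuadFun E × E | IsSectionEquation K (ν q.1) (c q.1) q.2.1 ∧
      ‖q.2.2‖ = 1 ∧ ⟪q.2.2, ν q.1⟫ = 0} :=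
    ((isClosed_setOf_isSectionEquation hν hν1 hc hK hK' hne).preimage
      (f := fun q : X × QuadFun E × E => (q.1, q.2.1)) (by fun_prop)).inter
      ((isClosed_eq (by fun_prop) (by fun_prop)).inter (isClosed_eq (by fun_prop) (by fun_prop)))
  refine (isCompact_univ.prod ((isCompact_sphere (0 : QuadFun E) 1).prod
    (isCompact_sphere (0 : E) 1))).of_isClosed_subset hclosed fun q hq => ⟨mem_univ _, ?_, ?_⟩
  · simpa using hq.1.norm_eq_one
  · simpa using hq.2.1

lemma exists_pos_forall_le_norm_halfGrad [CompactSpace X] [T2Space X] (hν : Continuous ν)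
    (hν1 : ∀ i, ‖ν i‖ = 1) (hc : Continuous c) (hE : 2 < Module.finrank ℝ E)
    (hK : StrictConvex ℝ K) (hK' : IsClosed K) (huniv : K ≠ univ)
    (hne : ∀ i, (interior K ∩ hyperplane (ν i) (c i)).Nonempty) :
    ∃ ε > 0, ∀ i T, IsSectionEquation K (ν i) (c i) T →
      ∀ y ∈ frontier K ∩ hyperplane (ν i) (c i), ε ≤ ‖T.halfGrad y‖ := by
  have := Module.finite_of_finrank_pos (by omega : 0 < Module.finrank ℝ E)
  obtain ⟨p, hp⟩ := exists_continuous_mem_interior_inter_hyperplane hν hν1 hc hK.convex hne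
  have hcont : Continuous fun q : X × QuadFun E × E => q.2.1.discr (p q.1) q.2.2 :=
    QuadFun.continuous_discr.comp (f := fun q : X × QuadFun E × E => (q.2.1, p q.1, q.2.2))
      (by fun_prop)
  obtain ⟨a, ha, hle⟩ := (isCompact_setOf_isSectionEquation_direction hν hν1 hc hK.convex hK'
    hne).exists_forall_le' hcont.continuousOn (a := 0) fun q hq =>
      hq.1.discr_pos (hν1 q.1) hE hK hK' huniv (hp q.1) (norm_pos_iff.1 (by simp [hq.2.1])) hq.2.2
  refine ⟨√a, Real.sqrt_pos.2 ha, fun i T hT y hy => (Real.sqrt_le_left (norm_nonneg _)).2 ?_⟩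
  have hyp : y ≠ p i := fun h => hy.1.2 (h ▸ (hp i).1)
  refine (hle (i, T, NormedSpace.normalize (y - p i)) ⟨hT, ?_, ?_⟩).trans
    (QuadFun.discr_normalize_le_sq_norm_halfGrad hT.isSymmetric (hT.eval_eq_zero y hy) hyp)
  · exact NormedSpace.norm_normalize (sub_ne_zero.2 hyp)
  · simp only [NormedSpace.normalize, real_inner_smul_left,
      inner_sub_eq_zero_of_mem_hyperplane hy.2 (hp i).2, mul_zero]

lemma exists_pos_forall_exists_closedBall_inter_hyperplane_subset [CompactSpace X] [T2Space X]
    (hν : Continuous ν) (hν1 : ∀ i, ‖ν i‖ = 1) (hc : Continuous c) (hE : 2 < Module.finrank ℝ E)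
    (hK : StrictConvex ℝ K) (hK' : IsClosed K) (huniv : K ≠ univ)
    (hne : ∀ i, (interior K ∩ hyperplane (ν i) (c i)).Nonempty)
    (heq : ∀ i, ∃ T, IsSectionEquation K (ν i) (c i) T) :
    ∃ ρ > 0, ∀ i, ∀ x ∈ frontier K ∩ hyperplane (ν i) (c i),
      ∃ z ∈ hyperplane (ν i) (c i), ‖x - z‖ = ρ ∧
        closedBall z ρ ∩ hyperplane (ν i) (c i) ⊆ K := by
  obtain ⟨ρ, hρ, hle⟩ := exists_pos_forall_le_norm_halfGrad hν hν1 hc hE hK hK' huniv hne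
  refine ⟨ρ, hρ, fun i x hx => ?_⟩
  obtain ⟨T, hT⟩ := heq i
  obtain ⟨p, hp⟩ := hne i
  have hgrad : ρ ≤ ‖T.halfGrad x‖ := hle i T hT x hx
  refine ⟨x - ρ • NormedSpace.normalize (T.halfGrad x), ?_, ?_,
    hT.closedBall_inter_hyperplane_subset hK.convex hK' hp hx
      (hT.inner_halfGrad_sub_neg (hν1 i) hE hK hK' huniv hp hx) hρ hgrad⟩
  · rw [sub_eq_add_neg, ← neg_smul, NormedSpace.normalize, smul_smul]
    exact add_smul_mem_hyperplane hx.2 (hT.inner_halfGrad_normal x) _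
  · rw [sub_sub_cancel, norm_smul, NormedSpace.norm_normalize (norm_pos_iff.1 (hρ.trans_le hgrad)),
      mul_one, Real.norm_of_nonneg hρ.le]

end Compactness

section QuadricSections

lemma forall_neg_or_forall_pos_of_isPreconnected {X : Type*} [TopologicalSpace X] {s : Set X}
    (hs : IsPreconnected s) {f : X → ℝ} (hf : ContinuousOn f s) (hf0 : ∀ x ∈ s, f x ≠ 0) :
    (∀ x ∈ s, f x < 0) ∨ ∀ x ∈ s, 0 < f x := by
  by_contra! h
  obtain ⟨⟨x, hx, hfx⟩, y, hy, hfy⟩ := h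
  obtain ⟨z, hz, hfz⟩ := hs.intermediate_value hy hx hf ⟨hfy, hfx⟩
  exact hf0 z hz hfz

section Frontier

variable {E F : Type*} [NormedAddCommGroup E] [NormedSpace ℝ E]
  [NormedAddCommGroup F] [NormedSpace ℝ F]

lemma nontrivial_frontier_of_isOpen_of_convex (hF : 1 < Module.rank ℝ F) {U : Set F}
    (hU : IsOpen U) (hUc : Convex ℝ U) (hUne : U.Nonempty) (hU' : U ≠ univ) :
    (frontier U).Nontrivial := by
  have : Nontrivial F := rank_pos_iff_nontrivial.1 (zero_lt_one.trans hF)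
  by_contra hsub
  obtain ⟨a, ha⟩ := nonempty_frontier_iff.2 ⟨hUne, hU'⟩
  have hfr : frontier U ⊆ {a} := fun x hx => not_nontrivial_iff.1 hsub hx ha
  have hcompl : ({a}ᶜ : Set F) ⊆ U := by
    refine subset_of_isPreconnected_of_disjoint_frontier
      (isConnected_compl_singleton_of_one_lt_rank hF a).isPreconnected ?_
      (disjoint_compl_left_iff_subset.2 hfr)
    exact ((dense_compl_singleton a).inter_open_nonempty U hU hUne).mono (inter_comm _ _).subset
  obtain ⟨v, hv⟩ := exists_ne (0 : F)
  have haU : a ∈ U := hUc.openSegment_subset (hcompl (by simpa using hv))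
    (hcompl (by simpa using hv)) (mem_openSegment_add_sub a v)
  exact ha.2 (hU.interior_eq.symm ▸ haU)

variable {K : Set E} {U : Set F} {φ : F →ᵃⁱ[ℝ] E}

lemma nonempty_preimage_interior_inter (hK : StrictConvex ℝ K) (hK' : IsClosed K)
    (hUc : Convex ℝ U) (hfr : frontier U = φ ⁻¹' frontier K) (hnt : (frontier U).Nontrivial) :
    (φ ⁻¹' interior K ∩ U).Nonempty := by
  obtain ⟨x, hx, y, hy, hxy⟩ := hnt
  have hmemK : ∀ z ∈ frontier U, φ z ∈ K := fun z hz => hK'.frontier_subset (hfr.subset hz)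
  set m := midpoint ℝ x y
  have hmK : φ m ∈ interior K := by
    refine hK.openSegment_subset (hmemK x hx) (hmemK y hy) (φ.map_ne hxy) ?_
    have := image_openSegment ℝ φ.toAffineMap x y
    exact this.subset ⟨m, midpoint_mem_openSegment x y, rfl⟩
  have hmcl : m ∈ closure U :=
    hUc.closure.segment_subset hx.1 hy.1 (midpoint_mem_segment x y)
  have hmfr : m ∉ frontier U := fun h => (hfr.subset h).2 hmK
  exact ⟨m, hmK, interior_subset (by_contra fun h => hmfr ⟨hmcl, h⟩)⟩

lemma preimage_interior_subset (hK : Convex ℝ K) (hfr : frontier U = φ ⁻¹' frontier K)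
    (hmeet : (φ ⁻¹' interior K ∩ U).Nonempty) : φ ⁻¹' interior K ⊆ U := by
  have hconv : Convex ℝ (φ ⁻¹' interior K) := hK.interior.affine_preimage φ.toAffineMap
  refine subset_of_isPreconnected_of_disjoint_frontier hconv.isPreconnected hmeet ?_
  rw [hfr]
  exact disjoint_interior_frontier.preimage φ

end Frontier

section InnerProduct

variable {E F : Type*} [NormedAddCommGroup E] [InnerProductSpace ℝ E] [CompleteSpace E]
  [NormedAddCommGroup F] [InnerProductSpace ℝ F] [CompleteSpace F]
  {u : E} {c : ℝ}

lemma exists_quadFun_eval_affineIsometry (φ : F →ᵃⁱ[ℝ] E) (hφ : range φ ⊆ hyperplane u c)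
    {S : QuadFun F} (hS : (S.1 : F →ₗ[ℝ] F).IsSymmetric) :
    ∃ T : QuadFun E, (T.1 : E →ₗ[ℝ] E).IsSymmetric ∧ T.1 u = 0 ∧ ⟪T.2.1, u⟫ = 0 ∧
      ∀ x, T.eval (φ x) = S.eval x := by
  set L : F →L[ℝ] E := φ.linearIsometry.toContinuousLinearMap
  have hL : ∀ x, L x = φ x - φ 0 := fun x => by
    have h := φ.map_vsub x 0
    rwa [vsub_eq_sub, sub_zero] at h
  have hLu : L.adjoint u = 0 := by
    refine ext_inner_left ℝ fun x => ?_
    rw [ContinuousLinearMap.adjoint_inner_right, hL, inner_zero_right]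
    exact inner_sub_eq_zero_of_mem_hyperplane (hφ (mem_range_self x)) (hφ (mem_range_self 0))
  have hLL : ∀ x, L.adjoint (L x) = x := fun x => ext_inner_right ℝ fun y => by
    rw [ContinuousLinearMap.adjoint_inner_left]
    exact φ.linearIsometry.inner_map_map x y
  refine ⟨S.compAffine L.adjoint (-L.adjoint (φ 0)), QuadFun.isSymmetric_compAffine hS _ _,
    ?_, ?_, fun x => ?_⟩
  · simp [QuadFun.compAffine, hLu]
  · simp only [QuadFun.compAffine, ContinuousLinearMap.adjoint_inner_left, hLu, inner_zero_right]
  · rw [QuadFun.eval_compAffine hS, ← sub_eq_add_neg, ← map_sub, ← hL, hLL]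

end InnerProduct

lemma exists_isSectionEquation_smul {E : Type*} [NormedAddCommGroup E] [InnerProductSpace ℝ E]
    {K : Set E} {u : E} {c : ℝ} {T : QuadFun E} (hK : Convex ℝ K)
    (hT : (T.1 : E →ₗ[ℝ] E).IsSymmetric) (hTu : T.1 u = 0) (hbu : ⟪T.2.1, u⟫ = 0)
    (hne : (interior K ∩ hyperplane u c).Nonempty)
    (hint : ∀ x ∈ interior K ∩ hyperplane u c, T.eval x ≠ 0)
    (hfr : ∀ x ∈ frontier K ∩ hyperplane u c, T.eval x = 0) :
    ∃ a : ℝ, IsSectionEquation K u c (a • T) := by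
  have hT0 : T ≠ 0 := by
    rintro rfl
    obtain ⟨x, hx⟩ := hne
    exact hint x hx (by simp [QuadFun.eval])
  have hnorm : 0 < ‖T‖⁻¹ := inv_pos.2 (norm_pos_iff.2 hT0)
  have key : ∀ a : ℝ, |a| = ‖T‖⁻¹ → (∀ x ∈ interior K ∩ hyperplane u c, a * T.eval x ≤ 0) →
      IsSectionEquation K u c (a • T) := fun a ha hle =>
    { norm_eq_one := by
        rw [norm_smul, Real.norm_eq_abs, ha, inv_mul_cancel₀ (norm_ne_zero_iff.2 hT0)]
      isSymmetric := hT.smul (conj_trivial a)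
      apply_normal := by simp [hTu]
      inner_normal := by simp [real_inner_smul_left, hbu]
      eval_nonpos := fun x hx => (QuadFun.eval_smul a T x).trans_le (hle x hx)
      eval_eq_zero := fun x hx => by rw [QuadFun.eval_smul, hfr x hx, mul_zero] }
  have hcont : Continuous T.eval :=
    QuadFun.continuous_eval.comp (f := fun x : E => (T, x)) (by fun_prop)
  rcases forall_neg_or_forall_pos_of_isPreconnected
    (hK.interior.inter (convex_hyperplane_inner u c)).isPreconnected hcont.continuousOn hint
    with hneg | hpos
  · exact ⟨_, key ‖T‖⁻¹ (abs_of_pos hnorm) fun x hx =>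
      (mul_neg_of_pos_of_neg hnorm (hneg x hx)).le⟩
  · exact ⟨_, key (-‖T‖⁻¹) (by rw [abs_neg, abs_of_pos hnorm]) fun x hx =>
      (mul_neg_of_neg_of_pos (neg_neg_of_pos hnorm) (hpos x hx)).le⟩

lemma IsQuadricSurface.exists_quadFun {m : ℕ} {Q : Set (En m)} (hQ : IsQuadricSurface Q) :
    ∃ S : QuadFun (En m), (S.1 : En m →ₗ[ℝ] En m).IsSymmetric ∧ Q = {x | S.eval x = 0} := by
  obtain ⟨a, b, c, ha, -, rfl⟩ := hQ
  refine ⟨(Matrix.toEuclideanCLM (𝕜 := ℝ) a, WithLp.toLp 2 b, c), fun x y => ?_, ?_⟩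
  · simp only [ContinuousLinearMap.coe_coe]
    rw [real_inner_comm, Matrix.inner_toEuclideanCLM, Matrix.inner_toEuclideanCLM,
      Matrix.dotProduct_mulVec, ← Matrix.mulVec_transpose, ha.eq, dotProduct_comm]
  · ext x
    have hquad : ⟪Matrix.toEuclideanCLM (𝕜 := ℝ) a x, x⟫ = ∑ i, ∑ k, a i k * x i * x k := by
      rw [real_inner_comm, Matrix.inner_toEuclideanCLM]
      simp only [dotProduct, Matrix.mulVec, Finset.mul_sum]
      exact Finset.sum_congr rfl fun i _ => Finset.sum_congr rfl fun k _ => by ring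
    have hlin : ⟪(WithLp.toLp 2 b : En m), x⟫ = ∑ i, b i * x i := by
      simp [PiLp.inner_apply, mul_comm]
    simp only [QuadFun.eval, mem_ofPred_eq, hquad, hlin]

lemma IsConvexQuadric.exists_quadFun {m : ℕ} {A : Set (En m)} (hA : IsConvexQuadric A) :
    ∃ (S : QuadFun (En m)) (U : Set (En m)), (S.1 : En m →ₗ[ℝ] En m).IsSymmetric ∧ IsOpen U ∧
      Convex ℝ U ∧ U.Nonempty ∧ U ≠ univ ∧ A = frontier U ∧ (∀ x ∈ U, S.eval x ≠ 0) ∧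
      ∀ x ∈ frontier U, S.eval x = 0 := by
  obtain ⟨Q, U, ⟨hQ, q, hq⟩, ⟨x₀, hx₀, rfl⟩, hUc, rfl⟩ := hA
  obtain ⟨S, hS, rfl⟩ := hQ.exists_quadFun
  have hcont : Continuous S.eval :=
    QuadFun.continuous_eval.comp (f := fun x : En m => (S, x)) (by fun_prop)
  have hQo : IsOpen {x | S.eval x = 0}ᶜ := (isClosed_eq hcont continuous_const).isOpen_compl
  have hUQ := connectedComponentIn_subset {x | S.eval x = 0}ᶜ x₀
  exact ⟨S, _, hS, hQo.connectedComponentIn, hUc, ⟨x₀, mem_connectedComponentIn hx₀⟩,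
    ne_univ_iff_exists_notMem _ |>.2 ⟨q, fun h => hUQ h hq⟩, rfl, fun x hx => hUQ hx,
    fun x hx => not_not.1 (frontier_connectedComponentIn_subset_compl hQo x₀ hx)⟩

lemma IsConvexQuadricIn.exists_isSectionEquation {n : ℕ} (hn : 3 ≤ n) {K : Set (En n)} {u : En n}
    {c : ℝ} (hK : StrictConvex ℝ K) (hK' : IsClosed K)
    (hsec : IsConvexQuadricIn (hyperplane u c) (frontier K ∩ hyperplane u c)) :
    (interior K ∩ hyperplane u c).Nonempty ∧ ∃ T, IsSectionEquation K u c T := by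
  obtain ⟨-, φ, hφ, hquad⟩ := hsec
  rw [← hφ, preimage_inter_range] at hquad
  obtain ⟨S, U, hS, hU, hUc, hUne, hU', hfr, hSU, hSfr⟩ := hquad.exists_quadFun
  have hrank : 1 < Module.rank ℝ (En (n - 1)) := by
    rw [← Module.finrank_eq_rank, finrank_euclideanSpace_fin]
    exact_mod_cast (by omega : 1 < n - 1)
  have hmeet := nonempty_preimage_interior_inter hK hK' hUc hfr.symm
    (nontrivial_frontier_of_isOpen_of_convex hrank hU hUc hUne hU')
  have hsub := preimage_interior_subset hK.convex hfr.symm hmeet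
  obtain ⟨T, hT, hTu, hbu, heval⟩ := exists_quadFun_eval_affineIsometry φ hφ.subset hS
  have hne : (interior K ∩ hyperplane u c).Nonempty :=
    hmeet.imp' φ fun x hx => ⟨hx.1, hφ.subset (mem_range_self x)⟩
  obtain ⟨a, ha⟩ := exists_isSectionEquation_smul hK.convex hT hTu hbu hne
    (by
      rw [← hφ]
      rintro _ ⟨hx, x, rfl⟩
      exact heval x ▸ hSU x (hsub hx))
    (by
      rw [← hφ]
      rintro _ ⟨hx, x, rfl⟩
      exact heval x ▸ hSfr x (hfr.subset hx))
  exact ⟨hne, _, ha⟩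

end QuadricSections

theorem uniform_rolling_ball_in_sections_general
    {n : ℕ} (hn : 3 ≤ n) (K : Set (En n)) (hKconv : Convex ℝ K) (hKcl : IsClosed K)
    (hKsc : IsStrictlyConvexSet K) (δ : sphere (0 : En n) 1 → ℝ) (hδ : Continuous δ)
    (hsec : ∀ u : sphere (0 : En n) 1,
      IsConvexQuadricIn (sphHyp δ u) (frontier K ∩ sphHyp δ u)) :
    ∃ ρ : ℝ, 0 < ρ ∧ ∀ u : sphere (0 : En n) 1, ∀ x ∈ frontier K ∩ sphHyp δ u,
      ∃ z ∈ sphHyp δ u, ‖x - z‖ = ρ ∧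
        {w : En n | w ∈ sphHyp δ u ∧ ‖w - z‖ ≤ ρ} ⊆ K ∩ sphHyp δ u := by
  rcases eq_or_ne K univ with rfl | hKne
  · exact ⟨1, one_pos, by simp⟩
  have hK : StrictConvex ℝ K := strictConvex_of_segment_not_subset_frontier hKconv hKcl hKsc
  have hE : 2 < Module.finrank ℝ (En n) := by rwa [finrank_euclideanSpace_fin]
  choose hne heq using fun u => (hsec u).exists_isSectionEquation hn hK hKcl
  obtain ⟨ρ, hρ, hball⟩ := exists_pos_forall_exists_closedBall_inter_hyperplane_subset
    continuous_subtype_val norm_eq_of_mem_sphere hδ hE hK hKcl hKne hne heq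
  refine ⟨ρ, hρ, fun u x hx => ?_⟩
  obtain ⟨z, hz, hxz, hsub⟩ := hball u x hx
  exact ⟨z, hz, hxz, fun w hw => ⟨hsub ⟨mem_closedBall_iff_norm.2 hw.2, hw.1⟩, hw.1⟩⟩

/-- Lemma 7: under the hypotheses of Theorem 2 with K strictly convex and
regular, there is a uniform radius ρ > 0 of interior balls rolling inside all the
hyperplane sections: for every u and every x ∈ frontier K ∩ H(u) there is z ∈ H(u) with
‖x − z‖ = ρ and the ball of radius ρ around z inside H(u) contained in K ∩ H(u). -/
theorem uniform_rolling_ball_in_sections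
    {n : ℕ} (hn : 3 ≤ n) (K : Set (En n)) (hKconv : Convex ℝ K) (hKcl : IsClosed K)
    (hKint : (interior K).Nonempty) (hKne : K ≠ Set.univ)
    (hKsc : IsStrictlyConvexSet K) (hKreg : IsRegularSet K)
    (δ : sphere (0 : En n) 1 → ℝ) (hδ : Continuous δ)
    (hsec : ∀ u : sphere (0 : En n) 1,
      IsConvexQuadricIn (sphHyp δ u) (frontier K ∩ sphHyp δ u)) :
    ∃ ρ : ℝ, 0 < ρ ∧ ∀ u : sphere (0 : En n) 1, ∀ x ∈ frontier K ∩ sphHyp δ u,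
      ∃ z ∈ sphHyp δ u, ‖x - z‖ = ρ ∧
        {w : En n | w ∈ sphHyp δ u ∧ ‖w - z‖ ≤ ρ} ⊆ K ∩ sphHyp δ u := by
  exact uniform_rolling_ball_in_sections_general hn K hKconv hKcl hKsc δ hδ hsec
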